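/- If n > 10080 is an extremely abundant number, then its largest prime factor p satisfies p < log n. -/

import Mathlib

open Real Finset

noncomputable section

/-- Sum of divisors of `n`. -/
def sigma1 (n : ℕ) : ℕ := n.divisors.sum id

/-- `n` is superabundant if `σ(n)/n > σ(m)/m` for all positive `m < n`. -/
def Superabundant (n : ℕ) : Prop :=
  0 < n ∧ ∀ m : ℕ, 0 < m → m < n → (sigma1 m : ℝ) / m < (sigma1 n : ℝ) / n

/-- Robin's quotient `f(n) = σ(n)/(n log log n)`. -/
def robinF (n : ℕ) : ℝ := (sigma1 n : ℝ) / (n * Real.log (Real.log n))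

/-- `n` is extremely abundant. -/
def ExtremelyAbundant (n : ℕ) : Prop :=
  n = 10080 ∨ (10080 < n ∧ ∀ m : ℕ, 10080 ≤ m → m < n → robinF m < robinF n)

theorem sigma1_eq_sigma (n : ℕ) : sigma1 n = ArithmeticFunction.sigma 1 n := by
  simp [sigma1, ArithmeticFunction.sigma_one_apply]

theorem sigma1_pos {n : ℕ} (hn : 0 < n) : 0 < sigma1 n := by
  rw [sigma1_eq_sigma]
  exact ArithmeticFunction.sigma_pos 1 n hn.ne'

theorem sigma1_mul_of_coprime {a b : ℕ} (h : a.Coprime b) :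
    sigma1 (a * b) = sigma1 a * sigma1 b := by
  simp only [sigma1_eq_sigma]
  exact ArithmeticFunction.isMultiplicative_sigma.map_mul_of_coprime h

theorem sigma1_prime_pow {p : ℕ} (hp : p.Prime) (a : ℕ) :
    sigma1 (p ^ a) = ∑ i ∈ range (a + 1), p ^ i := by
  simp [sigma1, Nat.divisors_prime_pow hp]

theorem sigma1_prime_mul_le {p : ℕ} (hp : p.Prime) {m : ℕ} (hm : 0 < m) :
    sigma1 (p * m) ≤ (p + 1) * sigma1 m := by
  have hsub : (p * m).divisors ⊆ m.divisors ∪ m.divisors.image (p * ·) := by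
    intro d hd
    have hdvd : d ∣ p * m := Nat.dvd_of_mem_divisors hd
    simp only [mem_union, mem_image, Nat.mem_divisors]
    by_cases hpd : p ∣ d
    · obtain ⟨e, rfl⟩ := hpd
      exact Or.inr ⟨e, ⟨Nat.dvd_of_mul_dvd_mul_left hp.pos hdvd, hm.ne'⟩, rfl⟩
    · exact Or.inl
        ⟨((Nat.Prime.coprime_iff_not_dvd hp).2 hpd).symm.dvd_of_dvd_mul_left hdvd, hm.ne'⟩
  calc sigma1 (p * m) ≤ ∑ d ∈ m.divisors ∪ m.divisors.image (p * ·), d :=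
        sum_le_sum_of_subset hsub
    _ ≤ ∑ d ∈ m.divisors, d + ∑ d ∈ m.divisors.image (p * ·), d := by
        rw [← sum_union_inter]
        exact Nat.le_add_right _ _
    _ = (p + 1) * sigma1 m := by
        rw [sum_image fun a _ b _ h => Nat.eq_of_mul_eq_mul_left hp.pos h, ← mul_sum]
        simp only [sigma1, id]
        ring

/-- `σ(m) / m ≤ C / D` for every positive `m < N`. -/
def AbundancyLE (N C D : ℕ) : Prop :=
  ∀ m : ℕ, 0 < m → m < N → D * sigma1 m ≤ C * m

/-- `σ(m) / m ≤ C / D` for every `m = 2 ^ a * 3 ^ b * 5 ^ c * 7 ^ d < N` with `a < 14`, `b < 9`,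
`c < 6` and `d < 5`. -/
def SmoothAbundancyLE (N C D : ℕ) : Prop :=
  ∀ a < 14, ∀ b < 9, ∀ c < 6, ∀ d < 5, 2 ^ a * (3 ^ b * (5 ^ c * 7 ^ d)) < N →
    D * ((∑ i ∈ range (a + 1), 2 ^ i) * ((∑ i ∈ range (b + 1), 3 ^ i) *
      ((∑ i ∈ range (c + 1), 5 ^ i) * (∑ i ∈ range (d + 1), 7 ^ i)))) ≤
      C * (2 ^ a * (3 ^ b * (5 ^ c * 7 ^ d)))

instance (N C D : ℕ) : Decidable (SmoothAbundancyLE N C D) := by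
  unfold SmoothAbundancyLE
  infer_instance

theorem eleven_le_of_prime {q : ℕ} (hq : q.Prime) (h2 : q ≠ 2) (h3 : q ≠ 3) (h5 : q ≠ 5)
    (h7 : q ≠ 7) : 11 ≤ q := by
  by_contra! h
  interval_cases q <;> first | omega | exact absurd hq (by norm_num)

theorem exists_smooth_decomposition {m : ℕ} (hm : 0 < m) :
    (∃ a b c d : ℕ, m = 2 ^ a * (3 ^ b * (5 ^ c * 7 ^ d))) ∨
      ∃ q : ℕ, q.Prime ∧ 11 ≤ q ∧ q ∣ m := by
  obtain ⟨a, u, h2, hu⟩ := Nat.exists_eq_pow_mul_and_not_dvd hm.ne' 2 (by norm_num)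
  have hu0 : u ≠ 0 := by rintro rfl; simp at h2
  obtain ⟨b, v, h3, hv⟩ := Nat.exists_eq_pow_mul_and_not_dvd hu0 3 (by norm_num)
  have hv0 : v ≠ 0 := by rintro rfl; simp at h3
  obtain ⟨c, w, h5, hw⟩ := Nat.exists_eq_pow_mul_and_not_dvd hv0 5 (by norm_num)
  have hw0 : w ≠ 0 := by rintro rfl; simp at h5
  obtain ⟨d, x, h7, hx⟩ := Nat.exists_eq_pow_mul_and_not_dvd hw0 7 (by norm_num)
  have hxw : x ∣ w := hx ▸ dvd_mul_left _ _
  have hwv : w ∣ v := hw ▸ dvd_mul_left _ _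
  have hvu : v ∣ u := hv ▸ dvd_mul_left _ _
  have hum : u ∣ m := hu ▸ dvd_mul_left _ _
  by_cases hx1 : x = 1
  · left
    exact ⟨a, b, c, d, by rw [hu, hv, hw, hx, hx1, mul_one]⟩
  · right
    have hq : x.minFac ∣ x := x.minFac_dvd
    refine ⟨x.minFac, Nat.minFac_prime hx1,
      eleven_le_of_prime (Nat.minFac_prime hx1) ?_ ?_ ?_ ?_,
      hq.trans (hxw.trans (hwv.trans (hvu.trans hum)))⟩
    · intro h; exact h2 (h ▸ hq.trans (hxw.trans (hwv.trans hvu)))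
    · intro h; exact h3 (h ▸ hq.trans (hxw.trans hwv))
    · intro h; exact h5 (h ▸ hq.trans hxw)
    · intro h; exact h7 (h ▸ hq)

theorem sigma1_smooth (a b c d : ℕ) :
    sigma1 (2 ^ a * (3 ^ b * (5 ^ c * 7 ^ d))) =
      (∑ i ∈ range (a + 1), 2 ^ i) * ((∑ i ∈ range (b + 1), 3 ^ i) *
        ((∑ i ∈ range (c + 1), 5 ^ i) * (∑ i ∈ range (d + 1), 7 ^ i))) := by
  have coprime_pow (p q i j : ℕ) (h : p.Coprime q) : (p ^ i).Coprime (q ^ j) := h.pow i j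
  rw [sigma1_mul_of_coprime, sigma1_mul_of_coprime, sigma1_mul_of_coprime,
    sigma1_prime_pow Nat.prime_two, sigma1_prime_pow Nat.prime_three,
    sigma1_prime_pow Nat.prime_five, sigma1_prime_pow Nat.prime_seven]
  · exact coprime_pow 5 7 c d (by norm_num)
  · exact (coprime_pow 3 5 b c (by norm_num)).mul_right (coprime_pow 3 7 b d (by norm_num))
  · exact (coprime_pow 2 3 a b (by norm_num)).mul_right
      ((coprime_pow 2 5 a c (by norm_num)).mul_right (coprime_pow 2 7 a d (by norm_num)))

theorem SmoothAbundancyLE.abundancyLE {N C D N' C' D' : ℕ} (hs : SmoothAbundancyLE N C D)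
    (hN : N ≤ 10080) (h' : AbundancyLE N' C' D') (hN' : N ≤ 11 * N') (hD' : 0 < D')
    (hC : 12 * C' * D ≤ 11 * C * D') : AbundancyLE N C D := by
  intro m hm hmN
  rcases exists_smooth_decomposition hm with ⟨a, b, c, d, rfl⟩ | ⟨q, hq, hq11, k, rfl⟩
  · have exponent_lt (p e E : ℕ) (hp : 1 < p) (hE : 10080 ≤ p ^ E)
        (hdvd : p ^ e ∣ 2 ^ a * (3 ^ b * (5 ^ c * 7 ^ d))) : e < E := by
      have := Nat.le_of_dvd hm hdvd
      exact (Nat.pow_lt_pow_iff_right hp).1 (by omega)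
    rw [sigma1_smooth]
    exact hs a (exponent_lt 2 a 14 (by norm_num) (by norm_num) ⟨_, rfl⟩)
      b (exponent_lt 3 b 9 (by norm_num) (by norm_num) ⟨2 ^ a * (5 ^ c * 7 ^ d), by ring⟩)
      c (exponent_lt 5 c 6 (by norm_num) (by norm_num) ⟨2 ^ a * (3 ^ b * 7 ^ d), by ring⟩)
      d (exponent_lt 7 d 5 (by norm_num) (by norm_num) ⟨2 ^ a * (3 ^ b * 5 ^ c), by ring⟩) hmN
  · have hk : 0 < k := Nat.pos_of_mul_pos_left hm
    have hkN : k < N' := by nlinarith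
    have hind := h' k hk hkN
    have hmul := sigma1_prime_mul_le hq hk
    refine Nat.le_of_mul_le_mul_left (c := 11 * D') ?_ (by omega)
    calc 11 * D' * (D * sigma1 (q * k))
        ≤ 11 * D' * (D * ((q + 1) * sigma1 k)) := by gcongr
      _ = 11 * (q + 1) * D * (D' * sigma1 k) := by ring
      _ ≤ 11 * (q + 1) * D * (C' * k) := by gcongr
      _ = (11 * (q + 1)) * (D * (C' * k)) := by ring
      _ ≤ (12 * q) * (D * (C' * k)) := Nat.mul_le_mul_right _ (by omega)
      _ = (12 * C' * D) * (q * k) := by ring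
      _ ≤ (11 * C * D') * (q * k) := by gcongr
      _ = 11 * D' * (C * (q * k)) := by ring

theorem abundancyLE_84 : AbundancyLE 84 14 5 := by
  have h8 : AbundancyLE 8 2 1 := by
    intro m hm hm8
    interval_cases m <;> decide
  exact SmoothAbundancyLE.abundancyLE (by decide +kernel) (by norm_num) h8 (by norm_num)
    (by norm_num) (by norm_num)

theorem abundancyLE_459 : AbundancyLE 459 13 4 :=
  SmoothAbundancyLE.abundancyLE (by decide +kernel) (by norm_num) abundancyLE_84 (by norm_num)
    (by norm_num) (by norm_num)

theorem abundancyLE_917 : AbundancyLE 917 24 7 :=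
  SmoothAbundancyLE.abundancyLE (by decide +kernel) (by norm_num) abundancyLE_84 (by norm_num)
    (by norm_num) (by norm_num)

theorem abundancyLE_2520 : AbundancyLE 2520 143 40 :=
  SmoothAbundancyLE.abundancyLE (by decide +kernel) (by norm_num) abundancyLE_459 (by norm_num)
    (by norm_num) (by norm_num)

theorem abundancyLE_5040 : AbundancyLE 5040 26 7 :=
  SmoothAbundancyLE.abundancyLE (by decide +kernel) (by norm_num) abundancyLE_459 (by norm_num)
    (by norm_num) (by norm_num)

theorem abundancyLE_10080 : AbundancyLE 10080 403 105 :=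
  SmoothAbundancyLE.abundancyLE (by decide +kernel) (by norm_num) abundancyLE_917 (by norm_num)
    (by norm_num) (by norm_num)

theorem sigma1_10080 : sigma1 10080 = 39312 := by
  have h := sigma1_smooth 5 2 1 1
  norm_num [sum_range_succ] at h
  exact h

theorem log_le_div_of_pow_le {x : ℝ} (hx : 0 < x) {a b : ℕ} (hb : 0 < b)
    (h : x ^ b ≤ 2.718281828 ^ a) : log x ≤ a / b := by
  have hexp : x ^ b ≤ exp a := by
    rw [← mul_one (a : ℝ), exp_nat_mul]
    exact h.trans (pow_le_pow_left₀ (by norm_num) (by linarith [exp_one_gt_d9]) a)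
  have hlog := log_le_log (pow_pos hx b) hexp
  rw [log_pow, log_exp] at hlog
  rw [le_div_iff₀ (by positivity)]
  linarith

theorem div_le_log_of_pow_le {x : ℝ} {a b : ℕ} (hb : 0 < b)
    (h : 2.718281829 ^ a ≤ x ^ b) : a / b ≤ log x := by
  have hexp : exp a ≤ x ^ b := by
    rw [← mul_one (a : ℝ), exp_nat_mul]
    exact (pow_le_pow_left₀ (exp_pos 1).le (by linarith [exp_one_lt_d9]) a).trans h
  have hlog := log_le_log (exp_pos _) hexp
  rw [log_pow, log_exp] at hlog
  rw [div_le_iff₀ (by positivity)]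
  linarith

set_option exponentiation.threshold 2000 in
theorem log_log_10080_le : log (log 10080) ≤ 278 / 125 := by
  have h₁ : log (10080 : ℝ) ≤ 461 / 50 := by
    exact_mod_cast log_le_div_of_pow_le (x := 10080) (a := 461) (b := 50)
      (by norm_num) (by norm_num) (by norm_num)
  have h₂ : log (461 / 50 : ℝ) ≤ 278 / 125 := by
    exact_mod_cast log_le_div_of_pow_le (x := 461 / 50) (a := 278) (b := 125)
      (by norm_num) (by norm_num) (by norm_num)
  exact (log_le_log (log_pos (by norm_num)) h₁).trans h₂

set_option exponentiation.threshold 2000 in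
theorem le_log_log_27720 : 58 / 25 ≤ log (log 27720) := by
  have h₁ : 511 / 50 ≤ log (27720 : ℝ) := by
    exact_mod_cast div_le_log_of_pow_le (x := 27720) (a := 511) (b := 50)
      (by norm_num) (by norm_num)
  have h₂ : 58 / 25 ≤ log (511 / 50 : ℝ) := by
    exact_mod_cast div_le_log_of_pow_le (x := 511 / 50) (a := 58) (b := 25)
      (by norm_num) (by norm_num)
  exact h₂.trans (log_le_log (by norm_num) h₁)

set_option exponentiation.threshold 2000 in
theorem le_log_log_55440 : 597 / 250 ≤ log (log 55440) := by
  have h₁ : 1091 / 100 ≤ log (55440 : ℝ) := by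
    exact_mod_cast div_le_log_of_pow_le (x := 55440) (a := 1091) (b := 100)
      (by norm_num) (by norm_num)
  have h₂ : 597 / 250 ≤ log (1091 / 100 : ℝ) := by
    exact_mod_cast div_le_log_of_pow_le (x := 1091 / 100) (a := 597) (b := 250)
      (by norm_num) (by norm_num)
  exact h₂.trans (log_le_log (by norm_num) h₁)

theorem seven_lt_log_10080 : 7 < log (10080 : ℝ) := by
  have h : 8 / 1 ≤ log (10080 : ℝ) := by
    exact_mod_cast div_le_log_of_pow_le (x := 10080) (a := 8) (b := 1)
      (by norm_num) (by norm_num)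
  linarith

theorem log_log_mono {x y : ℝ} (hx : 10080 ≤ x) (hxy : x ≤ y) : log (log x) ≤ log (log y) :=
  log_le_log (log_pos (by linarith)) (log_le_log (by linarith) hxy)

theorem log_log_pos {x : ℝ} (hx : 10080 ≤ x) : 0 < log (log x) :=
  log_pos (by linarith [seven_lt_log_10080, log_le_log (by norm_num) hx])

/-- Comparison of Robin's quotient at `p * m` and at `m`. -/
theorem lt_log_of_robinF_lt {p m : ℕ} (hp : p.Prime) (hm : 10080 ≤ m)
    (h : robinF m < robinF (p * m)) : (p : ℝ) < log (p * m : ℕ) := by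
  by_contra! hle
  have hm' : (10080 : ℝ) ≤ m := by exact_mod_cast hm
  have hp1 : (1 : ℝ) < p := by exact_mod_cast hp.one_lt
  have hmn : (m : ℝ) ≤ p * m := by nlinarith
  unfold robinF at h
  push_cast at h hle
  have hLm := log_log_pos hm'
  have hLn := log_log_pos (hm'.trans hmn)
  have hLmn := log_log_mono hm' hmn
  have hlogm : 0 < log (m : ℝ) := log_pos (by linarith)
  have hlogp : 0 < log (p : ℝ) := log_pos hp1
  have hlogn : log ((p : ℝ) * m) = log p + log m := log_mul (by linarith) (by linarith)
  have hσ : (0 : ℝ) < sigma1 m := by exact_mod_cast sigma1_pos (by omega : 0 < m)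
  have hσle : (sigma1 (p * m) : ℝ) ≤ (p + 1) * sigma1 m := by
    exact_mod_cast sigma1_prime_mul_le hp (by omega)
  rw [div_lt_div_iff₀ (by positivity) (by positivity)] at h
  have hratio : p * log (log ((p : ℝ) * m)) < (p + 1) * log (log (m : ℝ)) := by
    have hprod : (sigma1 m * m : ℝ) * (p * log (log ((p : ℝ) * m))) <
        (sigma1 m * m : ℝ) * ((p + 1) * log (log (m : ℝ))) := by
      have := mul_le_mul_of_nonneg_right hσle (by positivity : 0 ≤ (m : ℝ) * log (log m))
      linarith
    exact lt_of_mul_lt_mul_left hprod (by positivity)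
  have hlogn_pos : 0 < log ((p : ℝ) * m) := by linarith
  have hdiff : log p / log ((p : ℝ) * m) ≤ log (log ((p : ℝ) * m)) - log (log (m : ℝ)) := by
    have := one_sub_inv_le_log_of_pos (div_pos hlogn_pos hlogm)
    rw [log_div hlogn_pos.ne' hlogm.ne', inv_div] at this
    refine le_trans (le_of_eq ?_) this
    field_simp
    linarith
  have hlog_le : log (log ((p : ℝ) * m)) ≤ log p := log_le_log hlogn_pos hle
  have hmul : log (p : ℝ) ≤ p * (log p / log ((p : ℝ) * m)) := by
    rw [mul_div_assoc', le_div_iff₀ hlogn_pos]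
    linarith [mul_le_mul_of_nonneg_left hle hlogp.le]
  have := mul_le_mul_of_nonneg_left hdiff (by linarith : (0 : ℝ) ≤ p)
  linarith

theorem sigma1_mul_log_log_le {p m : ℕ} (hp : 11 ≤ p) (hn : 10080 < p * m)
    (hm : 0 < m) (hm10080 : m < 10080) :
    12 / 11 * sigma1 m * log (log 10080) ≤ 39 / 10 * m * log (log (p * m : ℕ)) := by
  have hL0 := log_log_pos (le_refl (10080 : ℝ))
  have hL0le := log_log_10080_le
  have hm' : (0 : ℝ) < m := by exact_mod_cast hm
  have hmono : log (log (10080 : ℝ)) ≤ log (log (p * m : ℕ)) :=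
    log_log_mono le_rfl (by exact_mod_cast hn.le)
  have of_bound {r L : ℝ} (hσ : (sigma1 m : ℝ) ≤ r * m) (hL : L ≤ log (log (p * m : ℕ)))
      (h : 12 / 11 * r * log (log 10080) ≤ 39 / 10 * L) :
      12 / 11 * sigma1 m * log (log 10080) ≤ 39 / 10 * m * log (log (p * m : ℕ)) :=
    calc 12 / 11 * sigma1 m * log (log 10080) ≤ 12 / 11 * (r * m) * log (log 10080) := by gcongr
      _ = (12 / 11 * r * log (log 10080)) * m := by ring
      _ ≤ (39 / 10 * L) * m := by gcongr
      _ ≤ (39 / 10 * log (log (p * m : ℕ))) * m := by gcongr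
      _ = _ := by ring
  rcases lt_or_ge m 2520 with h | h
  · have hσ : (40 * sigma1 m : ℝ) ≤ 143 * m := by exact_mod_cast abundancyLE_2520 m hm h
    exact of_bound (r := 143 / 40) (by linarith) hmono (by linarith)
  rcases lt_or_ge m 5040 with h' | h'
  · have hσ : (7 * sigma1 m : ℝ) ≤ 26 * m := by exact_mod_cast abundancyLE_5040 m hm h'
    have hn' : (27720 : ℝ) ≤ (p * m : ℕ) := by exact_mod_cast Nat.mul_le_mul hp h
    exact of_bound (r := 26 / 7) (by linarith)
      (le_log_log_27720.trans (log_log_mono (by norm_num) hn')) (by linarith)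
  · have hσ : (105 * sigma1 m : ℝ) ≤ 403 * m := by exact_mod_cast abundancyLE_10080 m hm hm10080
    have hn' : (55440 : ℝ) ≤ (p * m : ℕ) := by exact_mod_cast Nat.mul_le_mul hp h'
    exact of_bound (r := 403 / 105) (by linarith)
      (le_log_log_55440.trans (log_log_mono (by norm_num) hn')) (by linarith)

theorem robinF_le_robinF_10080 {p m : ℕ} (hp : p.Prime) (hp11 : 11 ≤ p) (hn : 10080 < p * m)
    (hm : m < 10080) : robinF (p * m) ≤ robinF 10080 := by
  have hm0 : 0 < m := Nat.pos_of_mul_pos_left (by omega : 0 < p * m)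
  have hkey := sigma1_mul_log_log_le hp11 hn hm0 hm
  have hL0 := log_log_pos (le_refl (10080 : ℝ))
  have hLn : 0 < log (log (p * m : ℕ)) := log_log_pos (by exact_mod_cast hn.le)
  have hm' : (0 : ℝ) < m := by exact_mod_cast hm0
  have hp' : (11 : ℝ) ≤ p := by exact_mod_cast hp11
  have hσle : (sigma1 (p * m) : ℝ) ≤ (p + 1) * sigma1 m := by
    exact_mod_cast sigma1_prime_mul_le hp hm0
  unfold robinF
  rw [sigma1_10080, div_le_div_iff₀ (by positivity) (by positivity)]
  push_cast at hkey hLn ⊢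
  calc (sigma1 (p * m) : ℝ) * (10080 * log (log 10080))
      ≤ (p + 1) * sigma1 m * (10080 * log (log 10080)) := by gcongr
    _ ≤ (12 / 11 * p) * sigma1 m * (10080 * log (log 10080)) := by gcongr; linarith
    _ = 10080 * p * (12 / 11 * sigma1 m * log (log 10080)) := by ring
    _ ≤ 10080 * p * (39 / 10 * m * log (log (p * m))) := by gcongr
    _ = 39312 * (p * m * log (log (p * m))) := by ring

theorem extremely_abundant_largest_prime_lt_log
    (n : ℕ) (hn : ExtremelyAbundant n) (hbig : 10080 < n)
    (p : ℕ) (hp : p.Prime) (hpn : p ∣ n)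
    (hmax : ∀ q : ℕ, q.Prime → q ∣ n → q ≤ p) :
    (p : ℝ) < Real.log n := by
  obtain ⟨m, rfl⟩ := hpn
  have hrec : ∀ k : ℕ, 10080 ≤ k → k < p * m → robinF k < robinF (p * m) :=
    (hn.resolve_left hbig.ne').2
  rcases le_or_gt 10080 m with hm | hm
  · exact lt_log_of_robinF_lt hp hm (hrec m hm (by nlinarith [hp.two_le]))
  by_contra! hle
  have hp7 : 7 < p := by
    have hlog : log (10080 : ℝ) ≤ log (p * m : ℕ) :=
      log_le_log (by norm_num) (by exact_mod_cast hbig.le)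
    have : (7 : ℝ) < p := by linarith [seven_lt_log_10080]
    exact_mod_cast this
  have hp11 : 11 ≤ p :=
    eleven_le_of_prime hp (by omega) (by omega) (by omega) (by omega)
  exact (robinF_le_robinF_10080 hp hp11 hbig hm).not_gt (hrec 10080 le_rfl hbig)
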